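/- Almost all labelled cubic multigraphs are asymmetric: the proportion of cubic multigraphs m on the vertex set Fin N that admit a nontrivial automorphism, i.e., a permutation σ ≠ id of Fin N with m(σu, σv) = m(u,v) for all u, v, tends to 0 as N → ∞ through even values of N. -/

import Mathlib

open Filter Real Topology

/-- A cubic multigraph on `Fin N`: a symmetric multiplicity function, where `m u u`
counts loops at `u` (each contributing 2 to the degree) and `m u v` (for `u ≠ v`)
counts edges between `u` and `v`, such that every vertex has degree 3. -/
def IsCubic {N : ℕ} (m : Fin N → Fin N → ℕ) : Prop :=
  (∀ u v, m u v = m v u) ∧ ∀ u, 2 * m u u + ∑ v ∈ Finset.univ.erase u, m u v = 3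

open Equiv (Perm)

/-- fixed-point-free involutions, i.e. perfect matchings -/
def IsPairing {X : Type*} (ρ : Perm X) : Prop := (∀ x, ρ (ρ x) = x) ∧ ∀ x, ρ x ≠ x

/-- number of perfect matchings of `X` -/
noncomputable def pairingCount (X : Type*) : ℕ := Nat.card {ρ : Perm X // IsPairing ρ}

/-- number of perfect matchings of `X` commuting with `g` -/
noncomputable def commCount {X : Type*} (g : Perm X) : ℕ :=
  Nat.card {ρ : Perm X // IsPairing ρ ∧ ρ * g = g * ρ}

/-- product of the first `M` odd numbers -/
def oddProd (M : ℕ) : ℕ := ∏ a ∈ Finset.range M, (2 * a + 1)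

lemma oddProd_mul (M : ℕ) : oddProd M * (2 ^ M * M.factorial) = (2 * M).factorial := by
  induction M with
  | zero => simp [oddProd]
  | succ M ih =>
    have h : oddProd (M + 1) = oddProd M * (2 * M + 1) := by
      simp [oddProd, Finset.prod_range_succ]
    have e : 2 * (M + 1) = 2 * M + 1 + 1 := by ring
    rw [h, e, Nat.factorial_succ (2 * M + 1), Nat.factorial_succ (2 * M), ← ih, Nat.factorial_succ,
      pow_succ]
    ring

lemma isPairing_iff_cycleType {X : Type*} [Fintype X] [DecidableEq X] {M : ℕ}
    (hM : Fintype.card X = 2 * M) (ρ : Perm X) :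
    IsPairing ρ ↔ ρ.cycleType = Multiset.replicate M 2 := by
  have : Fact (Nat.Prime 2) := ⟨Nat.prime_two⟩
  constructor
  · rintro ⟨h1, h2⟩
    have hsq : ρ ^ 2 = 1 := by
      ext x; simp [pow_two, h1]
    have h3 := Equiv.Perm.cycleType_of_pow_prime_eq_one hsq
    have hs : ρ.support = Finset.univ := by
      ext x; simp [h2]
    have h4 := ρ.sum_cycleType
    rw [hs, Finset.card_univ, hM, h3] at h4
    simp at h4
    rw [h3]
    congr 1
    omega
  · intro h
    have hsq : ρ ^ 2 = 1 := by
      rw [Equiv.Perm.pow_prime_eq_one_iff]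
      intro c hc
      rw [h] at hc
      exact Multiset.eq_of_mem_replicate hc
    refine ⟨fun x => ?_, fun x => ?_⟩
    · have := congrArg (fun f : Perm X => f x) hsq
      simpa [pow_two] using this
    · have h4 := ρ.sum_cycleType
      rw [h] at h4
      simp at h4
      have hs : ρ.support = Finset.univ := by
        rw [← Finset.card_eq_iff_eq_univ, ← h4, hM]; ring
      have : x ∈ ρ.support := by rw [hs]; simp
      simpa using this

lemma pairingCount_even {X : Type*} [Fintype X] {M : ℕ}
    (hM : Fintype.card X = 2 * M) : pairingCount X = oddProd M := by
  classical
  have h := Equiv.Perm.card_of_cycleType_mul_eq X (Multiset.replicate M 2)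
  have e : pairingCount X =
      (Finset.univ.filter (fun g : Perm X => g.cycleType = Multiset.replicate M 2)).card := by
    unfold pairingCount
    rw [Nat.card_eq_fintype_card, Fintype.card_subtype]
    congr 1
    ext ρ
    simp [isPairing_iff_cycleType hM]
  rw [← e] at h
  rw [if_pos ⟨by simp [hM, mul_comm], fun a ha => (Multiset.eq_of_mem_replicate ha).ge⟩] at h
  have h5 : (∏ n ∈ (Multiset.replicate M 2).toFinset,
      ((Multiset.replicate M 2).count n).factorial) = M.factorial := by
    rcases Nat.eq_zero_or_pos M with rfl | hp
    · simp
    · rw [Multiset.toFinset_replicate]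
      simp [hp.ne']
  rw [h5] at h
  have h6 := oddProd_mul M
  simp only [hM, Multiset.sum_replicate, Multiset.prod_replicate, smul_eq_mul] at h
  rw [mul_comm M 2, Nat.sub_self, Nat.factorial_zero, one_mul, ← h6] at h
  exact Nat.eq_of_mul_eq_mul_right (by positivity) h

lemma pairingCount_odd {X : Type*} [Fintype X] (h : ¬ Even (Fintype.card X)) :
    pairingCount X = 0 := by
  classical
  unfold pairingCount
  have : IsEmpty {ρ : Perm X // IsPairing ρ} := by
    refine ⟨fun ⟨ρ, h1, h2⟩ => h ?_⟩
    have hsq : ρ ^ 2 = 1 := by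
      ext x; simp [pow_two, h1]
    have hs : ρ.support = Finset.univ := by
      ext x; simp [h2]
    have := Equiv.Perm.two_dvd_card_support hsq
    rw [hs, Finset.card_univ] at this
    exact even_iff_two_dvd.2 this
  simp

lemma oddProd_add (a i : ℕ) : oddProd a * (a + i).factorial ≤ oddProd (a + i) * a.factorial := by
  induction i with
  | zero => simp
  | succ i ih =>
    have h : oddProd (a + (i + 1)) = oddProd (a + i) * (2 * (a + i) + 1) := by
      simp [oddProd, ← add_assoc, Finset.prod_range_succ]
    rw [h, ← add_assoc, Nat.factorial_succ]
    calc oddProd a * ((a + i + 1) * (a + i).factorial)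
        = (a + i + 1) * (oddProd a * (a + i).factorial) := by ring
      _ ≤ (2 * (a + i) + 1) * (oddProd (a + i) * a.factorial) :=
          Nat.mul_le_mul (by omega) ih
      _ = _ := by ring

lemma pow_self_le (i : ℕ) : (i : ℝ) ^ i ≤ i.factorial * 3 ^ i := by
  have h := Real.pow_div_factorial_le_exp (x := i) (by positivity) i
  rw [div_le_iff₀ (by positivity)] at h
  have h2 : Real.exp i ≤ 3 ^ i := by
    rw [← Real.exp_one_pow]
    exact pow_le_pow_left₀ (Real.exp_pos _).le Real.exp_one_lt_three.le _
  calc (i : ℝ) ^ i ≤ Real.exp i * i.factorial := h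
    _ ≤ 3 ^ i * i.factorial := by gcongr
    _ = _ := by ring

lemma fact_pow_le (a i : ℕ) :
    (a.factorial : ℝ) * ((a + i : ℕ) : ℝ) ^ i ≤ (a + i).factorial * 3 ^ i := by
  induction a with
  | zero => simpa using pow_self_le i
  | succ a ih =>
    have e : a + 1 + i = (a + i) + 1 := by ring
    rw [e, Nat.factorial_succ, Nat.factorial_succ]
    set x : ℝ := ((a + i : ℕ) : ℝ) with hx
    have hx0 : 0 ≤ x := by positivity
    have hb : ((a : ℝ) + 1) * (x + 1) ^ i ≤ (x + 1) * x ^ i := by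
      have h := one_add_mul_le_pow (a := -(1 / (x + 1))) (by
        have : 1 / (x + 1) ≤ 1 := by rw [div_le_one (by positivity)]; linarith
        linarith) i
      have e1 : 1 + -(1 / (x + 1)) = x / (x + 1) := by field_simp; ring
      have e2 : 1 + (i : ℝ) * -(1 / (x + 1)) = (a + 1) / (x + 1) := by
        field_simp; rw [hx]; push_cast; ring
      rw [e1, e2, div_pow, div_le_div_iff₀ (by positivity) (by positivity)] at h
      linarith
    have e3 : ((a + i + 1 : ℕ) : ℝ) = x + 1 := by rw [hx]; push_cast; ring
    rw [Nat.cast_mul, Nat.cast_mul, e3, Nat.cast_add, Nat.cast_one]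
    calc ((a : ℝ) + 1) * a.factorial * (x + 1) ^ i
        = a.factorial * (((a : ℝ) + 1) * (x + 1) ^ i) := by ring
      _ ≤ a.factorial * ((x + 1) * x ^ i) := by gcongr
      _ = (x + 1) * (a.factorial * x ^ i) := by ring
      _ ≤ (x + 1) * ((a + i).factorial * 3 ^ i) := by gcongr
      _ = _ := by ring

lemma oddProd_ratio (a i : ℕ) :
    (oddProd a : ℝ) * ((a + i : ℕ) : ℝ) ^ i ≤ oddProd (a + i) * 3 ^ i := by
  have h1 : (oddProd a : ℝ) * (a + i).factorial ≤ oddProd (a + i) * a.factorial := by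
    exact_mod_cast oddProd_add a i
  have h2 := fact_pow_le a i
  have hp : (0 : ℝ) < (a + i).factorial := by positivity
  have hq : (0 : ℝ) < a.factorial := by positivity
  refine le_of_mul_le_mul_left ?_ (mul_pos hp hq)
  calc ((a + i).factorial * a.factorial : ℝ) * (oddProd a * ((a + i : ℕ) : ℝ) ^ i)
      = (oddProd a * (a + i).factorial) * (a.factorial * ((a + i : ℕ) : ℝ) ^ i) := by ring
    _ ≤ (oddProd (a + i) * a.factorial) * ((a + i).factorial * 3 ^ i) := by gcongr
    _ = _ := by ring

/-- comparing numbers of matchings: `Z` is obtained from `X` by deleting `t` points. -/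
lemma pairingCount_ratio {X Z : Type*} [Fintype X] [Fintype Z] {N t : ℕ} (hN : Even N) (hN0 : 0 < N)
    (hX : Fintype.card X = 3 * N) (hZ : Fintype.card Z + t = 3 * N) :
    (pairingCount Z : ℝ) ≤ pairingCount X * (√(2 / N)) ^ t := by
  by_cases hev : Even (Fintype.card Z)
  · obtain ⟨n, hn⟩ := hN
    obtain ⟨a, ha⟩ := hev
    obtain ⟨i, rfl⟩ : ∃ i, t = 2 * i := ⟨3 * n - a, by omega⟩
    have e : a + i = 3 * n := by omega
    rw [pairingCount_even (X := Z) (M := a) (by omega),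
      pairingCount_even (X := X) (M := 3 * n) (by omega), pow_mul, Real.sq_sqrt (by positivity)]
    have h := oddProd_ratio a i
    rw [e] at h
    have hn0 : (0 : ℝ) < n := by
      have : 0 < n := by omega
      exact_mod_cast this
    have hNn : (N : ℝ) = 2 * n := by rw [hn]; push_cast; ring
    have e2 : (2 / (N : ℝ)) = 3 / ((3 * n : ℕ) : ℝ) := by
      rw [hNn]; push_cast; field_simp
    have h3 : (0 : ℝ) < ((3 * n : ℕ) : ℝ) := by push_cast; positivity
    rw [e2, div_pow, ← mul_div_assoc, le_div_iff₀ (by positivity)]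
    exact h
  · rw [pairingCount_odd hev]
    simp; positivity

section comm
variable {Y : Type*}

lemma comm_zpow {ρ g : Perm Y} (h : ρ * g = g * ρ) (z : ℤ) (x : Y) :
    ρ ((g ^ z) x) = (g ^ z) (ρ x) := by
  have h2 : Commute ρ g := h
  have := congrArg (fun f : Perm Y => f x) (h2.zpow_right z).eq
  simpa using this

lemma comm_sameCycle {ρ g : Perm Y} (h : ρ * g = g * ρ) {x y : Y} (hxy : g.SameCycle x y) :
    g.SameCycle (ρ x) (ρ y) := by
  obtain ⟨z, rfl⟩ := hxy
  exact ⟨z, (comm_zpow h z x).symm⟩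

lemma comm_agree {ρ ρ' g : Perm Y} (h : ρ * g = g * ρ) (h' : ρ' * g = g * ρ') {x y : Y}
    (hxy : g.SameCycle x y) (hx : ρ x = ρ' x) : ρ y = ρ' y := by
  obtain ⟨z, rfl⟩ := hxy
  rw [comm_zpow h, comm_zpow h', hx]

lemma self_unique {ρ ρ' g : Perm Y} (hp : IsPairing ρ) (hp' : IsPairing ρ')
    (h : ρ * g = g * ρ) (h' : ρ' * g = g * ρ') {x : Y}
    (hx : g.SameCycle x (ρ x)) (hx' : g.SameCycle x (ρ' x)) : ρ x = ρ' x := by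
  have key : ∀ {ρ : Perm Y}, IsPairing ρ → ρ * g = g * ρ → ∀ a : ℤ, (g ^ a) x = ρ x →
      ((Function.minimalPeriod (g • ·) x : ℤ) ∣ a + a) ∧
        ¬ ((Function.minimalPeriod (g • ·) x : ℤ) ∣ a) := by
    intro ρ hp h a ha
    rw [← MulAction.zpow_smul_eq_iff_minimalPeriod_dvd,
      ← MulAction.zpow_smul_eq_iff_minimalPeriod_dvd]
    constructor
    · rw [Equiv.Perm.smul_def, zpow_add, Equiv.Perm.mul_apply, ha, ← comm_zpow h, ha, hp.1]
    · rw [Equiv.Perm.smul_def, ha]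
      exact hp.2 x
  obtain ⟨a, ha⟩ := hx
  obtain ⟨b, hb⟩ := hx'
  obtain ⟨⟨c, hc⟩, h2⟩ := key hp h a ha
  obtain ⟨⟨d, hd⟩, h4⟩ := key hp' h' b hb
  have hab : (g ^ (a - b)) • x = x := by
    rw [MulAction.zpow_smul_eq_iff_minimalPeriod_dvd]
    set l : ℤ := (Function.minimalPeriod (g • ·) x : ℤ)
    rcases Int.even_or_odd' c with ⟨c', rfl | rfl⟩
    · exact absurd ⟨c', by linarith⟩ h2
    rcases Int.even_or_odd' d with ⟨d', rfl | rfl⟩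
    · exact absurd ⟨d', by linarith⟩ h4
    exact ⟨c' - d', by linarith⟩
  rw [← ha, ← hb]
  have : (g ^ a) x = (g ^ b) ((g ^ (a - b)) x) := by
    rw [← Equiv.Perm.mul_apply, ← zpow_add]; congr 2; ring
  rw [this]
  congr 1

end comm

lemma comm_inv {Y : Type*} {ρ g : Perm Y} (hp : IsPairing ρ) {x y : Y} (h : ρ * g = g * ρ)
    (hxy : g.SameCycle (ρ x) y) : g.SameCycle x (ρ y) := by
  have := comm_sameCycle h hxy
  rwa [hp.1] at this

/-- encoding of a pairing commuting with `g` -/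
noncomputable def enc {Y : Type*} (g : Perm Y)
    (en : Quotient (Equiv.Perm.SameCycle.setoid g) → ℕ) (ρ : Perm Y)
    (q : Quotient (Equiv.Perm.SameCycle.setoid g)) : Option Y :=
  if en q < en (Quotient.mk _ (ρ q.out)) then some (ρ q.out) else none

lemma enc_agree {Y : Type*} {g : Perm Y}
    (en : Quotient (Equiv.Perm.SameCycle.setoid g) → ℕ)
    {ρ ρ' : Perm Y} (hp : IsPairing ρ) (hp' : IsPairing ρ')
    (h : ρ * g = g * ρ) (h' : ρ' * g = g * ρ') (he : enc g en ρ = enc g en ρ') (y : Y)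
    (hlt : en (Quotient.mk _ y) ≠ en (Quotient.mk _ (ρ y))) : ρ y = ρ' y := by
  have asc : ∀ x : Y, en (Quotient.mk _ x) < en (Quotient.mk _ (ρ x)) → ρ x = ρ' x := by
    intro x hx
    set q : Quotient (Equiv.Perm.SameCycle.setoid g) := Quotient.mk _ x with hq
    have hqx : g.SameCycle q.out x := Quotient.exact (Quotient.out_eq q)
    have e1 : (Quotient.mk (Equiv.Perm.SameCycle.setoid g) (ρ q.out)) = Quotient.mk _ (ρ x) :=
      Quotient.sound (comm_sameCycle h hqx)
    have := congrFun he q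
    unfold enc at this
    rw [e1, if_pos hx] at this
    split_ifs at this
    exact comm_agree h h' hqx (Option.some.inj this)
  rcases lt_or_gt_of_ne hlt with hl | hl
  · exact asc y hl
  · have := asc (ρ y) (by rw [hp.1]; exact hl)
    rw [hp.1] at this
    have h2 := congrArg ρ' this
    rw [hp'.1] at h2
    exact h2.symm

lemma enc_injOn {Y : Type*} {g : Perm Y}
    (en : Quotient (Equiv.Perm.SameCycle.setoid g) → ℕ) (hen : Function.Injective en)
    {ρ ρ' : Perm Y} (hp : IsPairing ρ) (hp' : IsPairing ρ')
    (h : ρ * g = g * ρ) (h' : ρ' * g = g * ρ') (he : enc g en ρ = enc g en ρ') : ρ = ρ' := by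
  ext y
  by_cases h1 : en (Quotient.mk _ y) = en (Quotient.mk _ (ρ y))
  · by_cases h2 : en (Quotient.mk _ y) = en (Quotient.mk _ (ρ' y))
    · exact self_unique hp hp' h h' (Quotient.exact (hen h1)) (Quotient.exact (hen h2))
    · exact (enc_agree en hp' hp h' h he.symm y h2).symm
  · exact enc_agree en hp hp' h h' he y h1

lemma enc_card {Y : Type*} {g : Perm Y} [Fintype (Quotient (Equiv.Perm.SameCycle.setoid g))]
    [DecidableEq Y]
    (en : Quotient (Equiv.Perm.SameCycle.setoid g) → ℕ)
    {ρ : Perm Y} (hp : IsPairing ρ) (h : ρ * g = g * ρ) :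
    2 * (Finset.univ.filter (fun q => enc g en ρ q ≠ none)).card ≤
      Fintype.card (Quotient (Equiv.Perm.SameCycle.setoid g)) := by
  classical
  set L := Finset.univ.filter (fun q => enc g en ρ q ≠ none) with hL
  have memL : ∀ q, q ∈ L ↔ en q < en (Quotient.mk _ (ρ q.out)) := by
    intro q
    simp [hL, enc]
  set b : Quotient (Equiv.Perm.SameCycle.setoid g) → Quotient (Equiv.Perm.SameCycle.setoid g) :=
    fun q => Quotient.mk _ (ρ q.out) with hb
  have bb : ∀ q, b (b q) = q := by
    intro q
    have h1 : g.SameCycle (b q).out (ρ q.out) := Quotient.exact (Quotient.out_eq (b q))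
    have h2 := comm_sameCycle h h1
    rw [hp.1] at h2
    calc b (b q) = Quotient.mk _ (ρ (b q).out) := rfl
      _ = Quotient.mk _ q.out := Quotient.sound h2
      _ = q := Quotient.out_eq q
  have hle : L.card ≤ Lᶜ.card := by
    apply Finset.card_le_card_of_injOn b
    · intro q hq
      have hq' := (memL q).1 hq
      simp only [Finset.coe_compl, Set.mem_compl_iff, Finset.mem_coe, memL]
      change ¬ en (b q) < en (b (b q))
      rw [bb]
      exact not_lt.2 hq'.le
    · intro q _ q' _ hqq
      rw [← bb q, ← bb q', hqq]
  have := Finset.card_add_card_compl L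
  omega

lemma commCount_le {Y : Type*} [Fintype Y] [Nonempty Y] (g : Perm Y) {r : ℕ}
    (hr : Nat.card (Quotient (Equiv.Perm.SameCycle.setoid g)) ≤ r) :
    (commCount g : ℝ) ≤ 2 ^ r * √(Fintype.card Y) ^ r := by
  classical
  set Q := Quotient (Equiv.Perm.SameCycle.setoid g) with hQ
  let en : Q → ℕ := fun q => (Fintype.equivFin Q q : ℕ)
  have hen : Function.Injective en := fun a b hab =>
    (Fintype.equivFin Q).injective (Fin.ext hab)
  set t : ℝ := (Fintype.card Y : ℝ) with ht
  have ht1 : 1 ≤ t := by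
    rw [ht]; exact_mod_cast Fintype.card_pos (α := Y)
  have hs1 : 1 ≤ √t := by rw [Real.one_le_sqrt]; exact ht1
  have hst : √t ^ 2 = t := Real.sq_sqrt (by linarith)
  let w : Option Y → ℝ := fun o => if o = none then 1 else 1 / t
  have hw : ∀ o, 0 ≤ w o := by intro o; simp only [w]; split_ifs <;> positivity
  set S := {ρ : Perm Y // IsPairing ρ ∧ ρ * g = g * ρ} with hS
  have hcc : (commCount g : ℝ) = ∑ _ρ : S, (1 : ℝ) := by
    simp [commCount, hS, Nat.card_eq_fintype_card]
  have hone : ∀ ρ : S, (1 : ℝ) ≤ √t ^ (Fintype.card Q) * ∏ q, w (enc g en ρ.1 q) := by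
    intro ρ
    have hc := enc_card en ρ.2.1 ρ.2.2
    set L := Finset.univ.filter (fun q => enc g en ρ.1 q ≠ none) with hL
    have hprod : ∏ q, w (enc g en ρ.1 q) = (1 / t) ^ L.card := by
      simp only [w]
      rw [Finset.prod_ite, Finset.prod_const_one, one_mul, Finset.prod_const]
    rw [hprod, one_div, inv_pow, ← div_eq_mul_inv, le_div_iff₀ (by positivity), one_mul]
    calc t ^ L.card = √t ^ (2 * L.card) := by rw [pow_mul, hst]
      _ ≤ _ := pow_le_pow_right₀ hs1 hc
  have hsum : ∑ F : Q → Option Y, ∏ q, w (F q) = 2 ^ (Fintype.card Q) := by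
    rw [← Fintype.prod_sum (fun (_ : Q) (o : Option Y) => w o)]
    rw [Finset.prod_const, Finset.card_univ]
    congr 1
    rw [Fintype.sum_option]
    simp only [w]
    simp [← ht]
    norm_num
  have hinj : Function.Injective (fun ρ : S => enc g en ρ.1) := by
    intro ρ ρ' he
    exact Subtype.ext (enc_injOn en hen ρ.2.1 ρ'.2.1 ρ.2.2 ρ'.2.2 he)
  have hQr : Fintype.card Q ≤ r := by rwa [← Nat.card_eq_fintype_card]
  calc (commCount g : ℝ) = ∑ _ρ : S, (1 : ℝ) := hcc
    _ ≤ ∑ ρ : S, √t ^ (Fintype.card Q) * ∏ q, w (enc g en ρ.1 q) :=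
        Finset.sum_le_sum fun ρ _ => hone ρ
    _ = √t ^ (Fintype.card Q) * ∑ ρ : S, ∏ q, w (enc g en ρ.1 q) := by rw [Finset.mul_sum]
    _ ≤ √t ^ (Fintype.card Q) * ∑ F : Q → Option Y, ∏ q, w (F q) := by
        gcongr
        rw [← Finset.sum_image (s := (Finset.univ : Finset S)) (g := fun ρ : S => enc g en ρ.1)
          (f := fun F => ∏ q, w (F q)) (fun a _ b _ hab => hinj hab)]
        exact Finset.sum_le_sum_of_subset_of_nonneg (Finset.subset_univ _)
          (fun F _ _ => Finset.prod_nonneg fun q _ => hw _)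
    _ = 2 ^ (Fintype.card Q) * √t ^ (Fintype.card Q) := by rw [hsum, mul_comm]
    _ ≤ 2 ^ r * √t ^ r := by
        gcongr
        · norm_num

/-- splitting a commuting pairing into the fixed part and the moved part of `g` -/
lemma commCount_split {X : Type*} [Fintype X] (g : Perm X) :
    commCount g ≤ pairingCount {x // g x = x} *
      commCount (g.subtypePerm (p := fun x => ¬ g x = x)
        (fun x => by rw [EmbeddingLike.apply_eq_iff_eq])) := by
  classical
  have hfix : ∀ ρ : Perm X, ρ * g = g * ρ → ∀ x, g (ρ x) = ρ x ↔ g x = x := by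
    intro ρ h x
    have h1 : ρ (g x) = g (ρ x) := congrArg (fun f : Perm X => f x) h
    rw [← h1, EmbeddingLike.apply_eq_iff_eq]
  unfold pairingCount
  conv_rhs => unfold commCount
  unfold commCount
  rw [← Nat.card_prod]
  refine Nat.card_le_card_of_injective (fun ρ => (⟨ρ.1.subtypePerm (hfix ρ.1 ρ.2.2), ?_⟩,
    ⟨ρ.1.subtypePerm (fun x => not_congr (hfix ρ.1 ρ.2.2 x)), ?_⟩)) ?_
  · exact ⟨fun x => Subtype.ext (by simpa using ρ.2.1.1 x.1),
      fun x hx => ρ.2.1.2 x.1 (by simpa using congrArg Subtype.val hx)⟩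
  · refine ⟨⟨fun x => Subtype.ext (by simpa using ρ.2.1.1 x.1),
      fun x hx => ρ.2.1.2 x.1 (by simpa using congrArg Subtype.val hx)⟩, ?_⟩
    ext x
    exact congrArg (fun f : Perm X => f x.1) ρ.2.2
  · intro ρ ρ' h
    have h1 := congrArg Subtype.val (Prod.ext_iff.1 h).1
    have h2 := congrArg Subtype.val (Prod.ext_iff.1 h).2
    apply Subtype.ext
    ext x
    by_cases hx : g x = x
    · have := congrArg (fun f : Perm {x // g x = x} => (f ⟨x, hx⟩ : X)) h1
      exact this
    · have := congrArg (fun f : Perm {x // ¬ g x = x} => (f ⟨x, hx⟩ : X)) h2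
      exact this

section shear
variable {N : ℕ}

/-- the permutation of half-edges `(v, i) ↦ (σ v, τ v i)` -/
def shear (σ : Perm (Fin N)) (τ : Fin N → Perm (Fin 3)) : Perm (Fin N × Fin 3) :=
  Equiv.prodShear σ τ

@[simp] lemma shear_apply (σ : Perm (Fin N)) (τ : Fin N → Perm (Fin 3)) (v : Fin N) (i : Fin 3) :
    shear σ τ (v, i) = (σ v, τ v i) := rfl

/-- fixed vertices with nontrivial local twist -/
def twist (σ : Perm (Fin N)) (τ : Fin N → Perm (Fin 3)) : Finset (Fin N) :=
  Finset.univ.filter (fun v => σ v = v ∧ τ v ≠ 1)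

lemma shear_fix_iff (σ : Perm (Fin N)) (τ : Fin N → Perm (Fin 3)) (v : Fin N) (i : Fin 3) :
    shear σ τ (v, i) = (v, i) ↔ σ v = v ∧ τ v i = i := by
  simp

lemma moved_card (σ : Perm (Fin N)) (τ : Fin N → Perm (Fin 3)) :
    3 * σ.support.card + 2 * (twist σ τ).card ≤
        Fintype.card {x : Fin N × Fin 3 // ¬ shear σ τ x = x} ∧
      Fintype.card {x : Fin N × Fin 3 // ¬ shear σ τ x = x} ≤
        3 * σ.support.card + 3 * (twist σ τ).card := by
  classical
  have h1 : Fintype.card {x : Fin N × Fin 3 // ¬ shear σ τ x = x} =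
      ∑ v : Fin N, (Finset.univ.filter (fun i : Fin 3 => ¬ (σ v = v ∧ τ v i = i))).card := by
    rw [Fintype.card_subtype, Finset.card_filter, Fintype.sum_prod_type]
    refine Finset.sum_congr rfl fun v _ => ?_
    rw [Finset.card_filter]
    refine Finset.sum_congr rfl fun i _ => ?_
    simp only [shear_fix_iff]
  have h2 : σ.support.card = ∑ v : Fin N, if σ v ≠ v then 1 else 0 := by
    rw [← Finset.card_filter]; rfl
  have h3 : (twist σ τ).card = ∑ v : Fin N, if σ v = v ∧ τ v ≠ 1 then 1 else 0 := by
    rw [← Finset.card_filter]; rfl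
  rw [h1, h2, h3, Finset.mul_sum, Finset.mul_sum, Finset.mul_sum, ← Finset.sum_add_distrib,
    ← Finset.sum_add_distrib]
  have key : ∀ v : Fin N, 
      (3 * (if σ v ≠ v then 1 else 0) + 2 * (if σ v = v ∧ τ v ≠ 1 then 1 else 0) ≤
        (Finset.univ.filter (fun i : Fin 3 => ¬ (σ v = v ∧ τ v i = i))).card) ∧
      ((Finset.univ.filter (fun i : Fin 3 => ¬ (σ v = v ∧ τ v i = i))).card ≤
        3 * (if σ v ≠ v then 1 else 0) + 3 * (if σ v = v ∧ τ v ≠ 1 then 1 else 0)) := by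
    intro v
    by_cases hv : σ v = v
    · have e : (Finset.univ.filter (fun i : Fin 3 => ¬ (σ v = v ∧ τ v i = i))) =
          (τ v).support := by
        ext i; simp [hv]
      rw [e]
      by_cases ht : τ v = 1
      · simp [hv, ht]
      · have := Equiv.Perm.two_le_card_support_of_ne_one ht
        have h5 : (τ v).support.card ≤ 3 := by
          simpa using Finset.card_le_univ (τ v).support
        simp [hv, ht]
        exact ⟨this, h5⟩
    · simp [hv]
  exact ⟨Finset.sum_le_sum fun v _ => (key v).1, Finset.sum_le_sum fun v _ => (key v).2⟩

lemma shear_zpow_fst (σ : Perm (Fin N)) (τ : Fin N → Perm (Fin 3)) (z : ℤ) (x : Fin N × Fin 3) :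
    ((shear σ τ ^ z) x).1 = (σ ^ z) x.1 := by
  have hn : ∀ (n : ℕ) (x : Fin N × Fin 3), ((shear σ τ ^ n) x).1 = (σ ^ n) x.1 := by
    intro n
    induction n with
    | zero => simp
    | succ n ih =>
      intro x
      rw [pow_succ, pow_succ, Equiv.Perm.mul_apply, Equiv.Perm.mul_apply, ih]
      rfl
  cases z with
  | ofNat n => simpa using hn n x
  | negSucc n =>
    rw [zpow_negSucc, zpow_negSucc, Equiv.Perm.eq_inv_iff_eq, ← hn]
    simp

lemma fin3_sameCycle (t : Perm (Fin 3)) (i j : Fin 3) (hi : t i ≠ i) (hj : t j ≠ j) :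
    t.SameCycle i j := by
  have : i = j ∨ t i = j ∨ t j = i := by
    revert t i j; decide
  rcases this with rfl | rfl | rfl
  · exact Equiv.Perm.SameCycle.refl _ _
  · exact ⟨1, by simp⟩
  · exact Equiv.Perm.SameCycle.symm ⟨1, by simp⟩

lemma shear_sameCycle_of_fix (σ : Perm (Fin N)) (τ : Fin N → Perm (Fin 3)) (v : Fin N)
    (hv : σ v = v) (i j : Fin 3) (h : (τ v).SameCycle i j) :
    (shear σ τ).SameCycle (v, i) (v, j) := by
  obtain ⟨n, rfl⟩ := h.exists_nat_pow_eq
  refine ⟨n, ?_⟩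
  rw [zpow_natCast]
  clear h
  induction n with
  | zero => simp
  | succ n ih => rw [pow_succ', pow_succ', Equiv.Perm.mul_apply, ih]; simp [hv]

lemma moved_orbits (σ : Perm (Fin N)) (τ : Fin N → Perm (Fin 3)) :
    Nat.card (Quotient (Equiv.Perm.SameCycle.setoid ((shear σ τ).subtypePerm
      (p := fun x => ¬ shear σ τ x = x) (fun x => by rw [EmbeddingLike.apply_eq_iff_eq])))) ≤
      3 * σ.cycleFactorsFinset.card + (twist σ τ).card := by
  classical
  have hc : ∀ c : σ.cycleFactorsFinset, ∃ v, v ∈ (c : Perm (Fin N)).support := by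
    intro c
    have := (Equiv.Perm.mem_cycleFactorsFinset_iff.1 c.2).1
    exact this.nonempty_support
  choose rep hrep using hc
  have hrep' : ∀ c : σ.cycleFactorsFinset, σ (rep c) ≠ rep c := by
    intro c
    have := Equiv.Perm.mem_cycleFactorsFinset_support_le c.2 (hrep c)
    simpa using this
  have ht : ∀ v : twist σ τ, ∃ i, τ v.1 i ≠ i := by
    intro v
    have := (Finset.mem_filter.1 v.2).2.2
    by_contra hcon
    push Not at hcon
    exact this (Equiv.ext hcon)
  choose ix hix using ht
  have hsurj : ∃ f : (σ.cycleFactorsFinset × Fin 3) ⊕ twist σ τ →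
      {x : Fin N × Fin 3 // ¬ shear σ τ x = x}, 
      ∀ x : {x : Fin N × Fin 3 // ¬ shear σ τ x = x}, ∃ a, (shear σ τ).SameCycle (f a).1 x.1 := by
    refine ⟨Sum.elim (fun a => ⟨(rep a.1, a.2), by simp [hrep' a.1]⟩)
      (fun v => ⟨(v.1, ix v), by simp [hix v]⟩), ?_⟩
    rintro ⟨⟨v, i⟩, hx⟩
    by_cases hv : σ v = v
    · have hti : τ v i ≠ i := by
        intro h; exact hx (by simp [hv, h])
      have hvm : v ∈ twist σ τ := by
        simp only [twist, Finset.mem_filter, Finset.mem_univ, true_and]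
        exact ⟨hv, fun h => hti (by simp [h])⟩
      refine ⟨Sum.inr ⟨v, hvm⟩, ?_⟩
      exact shear_sameCycle_of_fix σ τ v hv _ _ (fin3_sameCycle _ _ _ (hix ⟨v, hvm⟩) hti)
    · have hm : σ.cycleOf v ∈ σ.cycleFactorsFinset := by
        rw [Equiv.Perm.cycleOf_mem_cycleFactorsFinset_iff]; simpa using hv
      have h1 := hrep ⟨_, hm⟩
      rw [Equiv.Perm.mem_support_cycleOf_iff] at h1
      obtain ⟨z, hz⟩ := h1.1
      refine ⟨Sum.inl (⟨_, hm⟩, ((shear σ τ ^ z) (v, i)).2), ?_⟩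
      refine Equiv.Perm.SameCycle.symm ⟨z, ?_⟩
      refine Prod.ext ?_ rfl
      rw [shear_zpow_fst]
      exact hz
  obtain ⟨f, hf⟩ := hsurj
  have hcard : Nat.card ((σ.cycleFactorsFinset × Fin 3) ⊕ twist σ τ) =
      3 * σ.cycleFactorsFinset.card + (twist σ τ).card := by
    simp [mul_comm]
  rw [← hcard]
  refine Nat.card_le_card_of_surjective (fun a => Quotient.mk _ (f a)) ?_
  intro q
  obtain ⟨x, rfl⟩ := Quotient.exists_rep q
  obtain ⟨a, ha⟩ := hf x
  exact ⟨a, Quotient.sound (Equiv.Perm.sameCycle_subtypePerm.2 ha)⟩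

/-- bound for the number of commuting pairings -/
lemma commCount_shear (hN : Even N) (σ : Perm (Fin N)) (hσ : σ ≠ 1)
    (τ : Fin N → Perm (Fin 3)) (h2 : 2 ≤ N) :
    (commCount (shear σ τ) : ℝ) ≤ pairingCount (Fin N × Fin 3) *
      (√(2 / N) ^ (3 * σ.support.card + 2 * (twist σ τ).card) *
      (2 ^ (3 * σ.cycleFactorsFinset.card + (twist σ τ).card) *
        √(3 * σ.support.card + 3 * (twist σ τ).card : ℝ) ^
          (3 * σ.cycleFactorsFinset.card + (twist σ τ).card))) := by
  classical
  obtain ⟨hlo, hhi⟩ := moved_card σ τ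
  have hs := Equiv.Perm.two_le_card_support_of_ne_one hσ
  have hne : Nonempty {x : Fin N × Fin 3 // ¬ shear σ τ x = x} := by
    rw [← Fintype.card_pos_iff]; omega
  have hr := moved_orbits σ τ
  have hB := commCount_le _ hr
  have hsp : (commCount (shear σ τ) : ℝ) ≤ _ := Nat.cast_le.2 (commCount_split (shear σ τ))
  rw [Nat.cast_mul] at hsp
  have hA := pairingCount_ratio (X := Fin N × Fin 3) (Z := {x // shear σ τ x = x}) (N := N)
    (t := Fintype.card {x : Fin N × Fin 3 // ¬ shear σ τ x = x}) hN (by omega)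
    (by simp [mul_comm]) (by
      rw [Fintype.card_subtype_compl]
      have : Fintype.card {x // shear σ τ x = x} ≤ Fintype.card (Fin N × Fin 3) :=
        Fintype.card_subtype_le _
      simp only [Fintype.card_prod, Fintype.card_fin] at this ⊢
      omega)
  have hy1 : √(2 / (N : ℝ)) ≤ 1 := by
    rw [Real.sqrt_le_one, div_le_one (by positivity)]
    exact_mod_cast h2
  calc (commCount (shear σ τ) : ℝ) ≤ _ := hsp
    _ ≤ (pairingCount (Fin N × Fin 3) *
      √(2 / N) ^ (Fintype.card {x : Fin N × Fin 3 // ¬ shear σ τ x = x})) * _ :=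
        mul_le_mul hA hB (by positivity) (by positivity)
    _ ≤ _ := by
      rw [mul_assoc]
      refine mul_le_mul_of_nonneg_left ?_ (by positivity)
      refine mul_le_mul ?_ ?_ (by positivity) (by positivity)
      · exact pow_le_pow_of_le_one (by positivity) hy1 hlo
      · refine mul_le_mul_of_nonneg_left ?_ (by positivity)
        refine pow_le_pow_left₀ (by positivity) (Real.sqrt_le_sqrt ?_) _
        exact_mod_cast hhi

end shear

section sums
variable {N : ℕ}

lemma twist_count (σ : Perm (Fin N)) (j : ℕ) :
    (Finset.univ.filter (fun τ : Fin N → Perm (Fin 3) => (twist σ τ).card = j)).card ≤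
      N.choose j * 6 ^ (σ.support.card + j) := by
  classical
  have hsub : (Finset.univ.filter (fun τ : Fin N → Perm (Fin 3) => (twist σ τ).card = j)) ⊆
      (Finset.powersetCard j (Finset.univ : Finset (Fin N))).biUnion (fun J =>
        Fintype.piFinset (fun v => if v ∈ σ.support ∪ J then
          (Finset.univ : Finset (Perm (Fin 3))) else {1})) := by
    intro τ hτ
    rw [Finset.mem_filter] at hτ
    rw [Finset.mem_biUnion]
    refine ⟨twist σ τ, by simp [Finset.mem_powersetCard, hτ.2], ?_⟩
    rw [Fintype.mem_piFinset]
    intro v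
    split_ifs with hv
    · simp
    · simp only [Finset.mem_union, not_or] at hv
      rw [Finset.mem_singleton]
      by_contra hne
      apply hv.2
      simp only [twist, Finset.mem_filter, Finset.mem_univ, true_and]
      exact ⟨by simpa using hv.1, hne⟩
  refine (Finset.card_le_card hsub).trans (Finset.card_biUnion_le.trans ?_)
  have : ∀ J ∈ Finset.powersetCard j (Finset.univ : Finset (Fin N)),
      (Fintype.piFinset (fun v => if v ∈ σ.support ∪ J then
          (Finset.univ : Finset (Perm (Fin 3))) else {1})).card ≤ 6 ^ (σ.support.card + j) := by
    intro J hJ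
    rw [Finset.mem_powersetCard] at hJ
    rw [Fintype.card_piFinset]
    have e : ∀ v : Fin N, (if v ∈ σ.support ∪ J then
          (Finset.univ : Finset (Perm (Fin 3))) else {1}).card =
          if v ∈ σ.support ∪ J then 6 else 1 := by
      intro v
      split_ifs
      · rw [Finset.card_univ, Fintype.card_perm, Fintype.card_fin]; rfl
      · simp
    rw [Finset.prod_congr rfl (fun v _ => e v)]
    rw [Finset.prod_ite, Finset.prod_const_one, mul_one, Finset.prod_const]
    apply Nat.pow_le_pow_right (by norm_num)
    calc _ = (σ.support ∪ J).card := by congr 1; ext v; simp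
      _ ≤ σ.support.card + J.card := Finset.card_union_le _ _
      _ = _ := by rw [hJ.2]
  refine (Finset.sum_le_sum this).trans ?_
  rw [Finset.sum_const, Finset.card_powersetCard, smul_eq_mul]
  simp

lemma sum_twist (σ : Perm (Fin N)) (b : ℕ → ℝ) (hb : ∀ j, 0 ≤ b j) :
    ∑ τ : Fin N → Perm (Fin 3), b (twist σ τ).card ≤
      ∑ j ∈ Finset.range (N + 1), (N.choose j : ℝ) * 6 ^ (σ.support.card + j) * b j := by
  classical
  rw [← Finset.sum_fiberwise_of_maps_to (s := Finset.univ) (t := Finset.range (N + 1))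
    (g := fun τ : Fin N → Perm (Fin 3) => (twist σ τ).card)]
  · refine Finset.sum_le_sum fun j _ => ?_
    calc ∑ τ ∈ Finset.univ.filter (fun τ : Fin N → Perm (Fin 3) => (twist σ τ).card = j),
          b (twist σ τ).card
        = ∑ τ ∈ Finset.univ.filter (fun τ : Fin N → Perm (Fin 3) => (twist σ τ).card = j), b j :=
          Finset.sum_congr rfl fun τ hτ => by rw [(Finset.mem_filter.1 hτ).2]
      _ = ((Finset.univ.filter
            (fun τ : Fin N → Perm (Fin 3) => (twist σ τ).card = j)).card : ℝ) * b j := by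
          rw [Finset.sum_const, nsmul_eq_mul]
      _ ≤ _ := by
          refine mul_le_mul_of_nonneg_right ?_ (hb j)
          exact_mod_cast twist_count σ j
  · intro τ _
    rw [Finset.mem_range, Nat.lt_succ_iff]
    simpa using Finset.card_le_univ (twist σ τ)

lemma sqrt_pow_bound1 (s j k : ℕ) (hs : 0 < s) (hk : 2 * k ≤ s) :
    √((s : ℝ) + j) ^ (3 * k) ≤ √(s : ℝ) ^ (3 * k) * 3 ^ j := by
  have hs' : (0 : ℝ) < s := by exact_mod_cast hs
  have h1 : (s : ℝ) + j ≤ s * Real.exp (j / s) := by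
    have := Real.add_one_le_exp ((j : ℝ) / s)
    calc (s : ℝ) + j = s * (j / s + 1) := by field_simp; ring
      _ ≤ _ := by gcongr
  have h2 : √((s : ℝ) + j) ≤ √(s : ℝ) * Real.exp (j / (2 * s)) := by
    rw [Real.sqrt_le_left (by positivity), mul_pow, Real.sq_sqrt hs'.le, ← Real.exp_nat_mul]
    convert h1 using 3
    push_cast; field_simp
  calc √((s : ℝ) + j) ^ (3 * k) ≤ (√(s : ℝ) * Real.exp (j / (2 * s))) ^ (3 * k) := by gcongr
    _ = √(s : ℝ) ^ (3 * k) * Real.exp ((3 * k : ℕ) * (j / (2 * s))) := by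
      rw [mul_pow, ← Real.exp_nat_mul]
    _ ≤ √(s : ℝ) ^ (3 * k) * Real.exp j := by
      gcongr
      have hk' : (2 : ℝ) * k ≤ s := by exact_mod_cast hk
      push_cast
      rw [← mul_div_assoc, div_le_iff₀ (by positivity)]
      have hj : (0 : ℝ) ≤ j := by positivity
      nlinarith
    _ ≤ √(s : ℝ) ^ (3 * k) * 3 ^ j := by
      gcongr
      rw [← Real.exp_one_pow]
      exact pow_le_pow_left₀ (Real.exp_pos _).le Real.exp_one_lt_three.le _

lemma sqrt_pow_bound2 (s j : ℕ) :
    √((s : ℝ) + j) ^ j ≤ √(j.factorial : ℝ) * 3 ^ (s + j) := by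
  have h := Real.pow_div_factorial_le_exp (x := (s : ℝ) + j) (by positivity) j
  rw [div_le_iff₀ (by positivity)] at h
  have h2 : Real.exp ((s : ℝ) + j) ≤ 3 ^ (s + j) := by
    have e : (s : ℝ) + j = ((s + j : ℕ) : ℝ) := by push_cast; ring
    rw [e, ← Real.exp_one_pow]
    exact pow_le_pow_left₀ (Real.exp_pos _).le Real.exp_one_lt_three.le _
  have h3 : (1 : ℝ) ≤ 3 ^ (s + j) := one_le_pow₀ (by norm_num)
  have h4 : √((s : ℝ) + j) ^ j = √(((s : ℝ) + j) ^ j) := by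
    rw [eq_comm, Real.sqrt_eq_iff_mul_self_eq (by positivity) (by positivity), ← mul_pow,
      Real.mul_self_sqrt (by positivity)]
  rw [h4, Real.sqrt_le_left (by positivity), mul_pow, Real.sq_sqrt (by positivity)]
  calc ((s : ℝ) + j) ^ j ≤ Real.exp (s + j) * j.factorial := h
    _ ≤ 3 ^ (s + j) * j.factorial := by gcongr
    _ ≤ (3 ^ (s + j)) ^ 2 * j.factorial := by
        gcongr
        exact le_self_pow₀ h3 (by norm_num)
    _ = _ := by ring

/-- the absolute constant in the tail sum -/
noncomputable def K0 : ℝ := Real.exp (864 ^ 2)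

lemma K0_pos : 0 < K0 := Real.exp_pos _

lemma pow_bound3 (j : ℕ) : (432 : ℝ) ^ j / √(j.factorial : ℝ) ≤ K0 * (1 / 2) ^ j := by
  have h := Real.pow_div_factorial_le_exp (x := 864 ^ 2) (by positivity) j
  rw [div_le_iff₀ (by positivity)] at h
  have hK1 : 1 ≤ K0 := by
    unfold K0; exact Real.one_le_exp (by positivity)
  change _ ≤ K0 * _ at h
  have h2 : (864 : ℝ) ^ j ≤ K0 * √(j.factorial : ℝ) := by
    refine le_of_sq_le_sq ?_ (by have := K0_pos; positivity)
    rw [mul_pow, Real.sq_sqrt (by positivity)]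
    calc ((864 : ℝ) ^ j) ^ 2 = (864 ^ 2) ^ j := by rw [← pow_mul, ← pow_mul, mul_comm]
      _ ≤ K0 * j.factorial := h
      _ ≤ K0 ^ 2 * j.factorial := by
        gcongr
        exact le_self_pow₀ hK1 (by norm_num)
  rw [div_le_iff₀ (by positivity)]
  calc (432 : ℝ) ^ j = 864 ^ j * (1 / 2) ^ j := by rw [← mul_pow]; norm_num
    _ ≤ (K0 * √(j.factorial : ℝ)) * (1 / 2) ^ j := by gcongr
    _ = _ := by ring

lemma term_bound (s j k : ℕ) (hs : 0 < s) (hk : 2 * k ≤ s) (hN : 0 < N) :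
    (N.choose j : ℝ) * 6 ^ (s + j) * (√(2 / N) ^ (3 * s + 2 * j) *
      (2 ^ (3 * k + j) * √(3 * s + 3 * j : ℝ) ^ (3 * k + j))) ≤
    (288 ^ s * √(2 / N) ^ (3 * s) * √(s : ℝ) ^ (3 * k)) * (K0 * (1 / 2) ^ j) := by
  have hN' : (0 : ℝ) < N := by exact_mod_cast hN
  have h1 : (N.choose j : ℝ) ≤ (N : ℝ) ^ j / j.factorial := Nat.choose_le_pow_div j N
  have h2 : √(2 / (N : ℝ)) ^ (2 * j) = (2 / N) ^ j := by
    rw [pow_mul, Real.sq_sqrt (by positivity)]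
  have h3 : √(3 * s + 3 * j : ℝ) ≤ 2 * √((s : ℝ) + j) := by
    rw [Real.sqrt_le_left (by positivity), mul_pow, Real.sq_sqrt (by positivity)]
    have : (0 : ℝ) ≤ (s : ℝ) + j := by positivity
    linarith
  have h4 : √(3 * s + 3 * j : ℝ) ^ (3 * k + j) ≤
      2 ^ (3 * k + j) * ((√(s : ℝ) ^ (3 * k) * 3 ^ j) * (√(j.factorial : ℝ) * 3 ^ (s + j))) := by
    calc √(3 * s + 3 * j : ℝ) ^ (3 * k + j) ≤ (2 * √((s : ℝ) + j)) ^ (3 * k + j) := by gcongr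
      _ = 2 ^ (3 * k + j) * (√((s : ℝ) + j) ^ (3 * k) * √((s : ℝ) + j) ^ j) := by
        rw [mul_pow, pow_add (√((s : ℝ) + j))]
      _ ≤ _ := by
        gcongr
        · exact sqrt_pow_bound1 s j k hs hk
        · exact sqrt_pow_bound2 s j
  have h5 : (2 : ℝ) ^ (3 * k) ≤ 4 ^ s := by
    calc (2 : ℝ) ^ (3 * k) ≤ 2 ^ (2 * s) := pow_le_pow_right₀ (by norm_num) (by omega)
      _ = 4 ^ s := by rw [pow_mul]; norm_num
  have hf : √(j.factorial : ℝ) * √(j.factorial : ℝ) = j.factorial :=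
    Real.mul_self_sqrt (by positivity)
  have hfp : 0 < √(j.factorial : ℝ) := by positivity
  calc (N.choose j : ℝ) * 6 ^ (s + j) * (√(2 / N) ^ (3 * s + 2 * j) *
      (2 ^ (3 * k + j) * √(3 * s + 3 * j : ℝ) ^ (3 * k + j)))
      ≤ ((N : ℝ) ^ j / j.factorial) * 6 ^ (s + j) * (√(2 / N) ^ (3 * s + 2 * j) *
      (2 ^ (3 * k + j) * (2 ^ (3 * k + j) *
        ((√(s : ℝ) ^ (3 * k) * 3 ^ j) * (√(j.factorial : ℝ) * 3 ^ (s + j)))))) := by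
        gcongr
    _ = (6 ^ s * 3 ^ s * (2 ^ (3 * k) * 2 ^ (3 * k)) * √(2 / N) ^ (3 * s) * √(s : ℝ) ^ (3 * k)) *
        (432 ^ j / √(j.factorial : ℝ)) := by
        rw [pow_add (√(2 / (N : ℝ))), h2, div_pow, pow_add, pow_add, pow_add]
        have e : (432 : ℝ) ^ j = 6 ^ j * 2 ^ j * 2 ^ j * 2 ^ j * 3 ^ j * 3 ^ j := by
          rw [← mul_pow, ← mul_pow, ← mul_pow, ← mul_pow, ← mul_pow]; norm_num
        rw [e]
        nth_rewrite 1 [← hf]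
        field_simp
    _ ≤ (6 ^ s * 3 ^ s * (4 ^ s * 4 ^ s) * √(2 / N) ^ (3 * s) * √(s : ℝ) ^ (3 * k)) *
        (K0 * (1 / 2) ^ j) := by
        gcongr
        exact pow_bound3 j
    _ = _ := by
        rw [← mul_pow, ← mul_pow, ← mul_pow]; norm_num

lemma geom_half (n : ℕ) : ∑ j ∈ Finset.range n, ((1 : ℝ) / 2) ^ j ≤ 2 := by
  have := sum_geometric_two_le n
  simpa using this

/-- the total number of (twist, pairing) pairs for a given `σ` -/
lemma sum_commCount (hN : Even N) (h2 : 2 ≤ N) (σ : Perm (Fin N)) (hσ : σ ≠ 1) (s k : ℕ)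
    (hs : σ.support.card = s) (hk : σ.cycleFactorsFinset.card = k) (hks : 2 * k ≤ s) :
    ∑ τ : Fin N → Perm (Fin 3), (commCount (shear σ τ) : ℝ) ≤
      pairingCount (Fin N × Fin 3) *
        (2 * K0 * (288 ^ s * √(2 / N) ^ (3 * s) * √(s : ℝ) ^ (3 * k))) := by
  have hspos : 0 < s := by
    have := Equiv.Perm.two_le_card_support_of_ne_one hσ
    omega
  set b : ℕ → ℝ := fun j => √(2 / N) ^ (3 * s + 2 * j) *
      (2 ^ (3 * k + j) * √(3 * s + 3 * j : ℝ) ^ (3 * k + j)) with hb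
  have h1 : ∀ τ : Fin N → Perm (Fin 3), (commCount (shear σ τ) : ℝ) ≤
      pairingCount (Fin N × Fin 3) * b (twist σ τ).card := by
    intro τ
    have := commCount_shear hN σ hσ τ h2
    rw [hs, hk] at this
    exact this
  calc ∑ τ : Fin N → Perm (Fin 3), (commCount (shear σ τ) : ℝ)
      ≤ ∑ τ : Fin N → Perm (Fin 3), pairingCount (Fin N × Fin 3) * b (twist σ τ).card :=
        Finset.sum_le_sum fun τ _ => h1 τ
    _ = pairingCount (Fin N × Fin 3) * ∑ τ : Fin N → Perm (Fin 3), b (twist σ τ).card := by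
        rw [Finset.mul_sum]
    _ ≤ pairingCount (Fin N × Fin 3) * (2 * K0 *
          (288 ^ s * √(2 / N) ^ (3 * s) * √(s : ℝ) ^ (3 * k))) := by
        refine mul_le_mul_of_nonneg_left ?_ (by positivity)
        refine (sum_twist σ b (fun j => by positivity)).trans ?_
        rw [hs]
        calc _ ≤ ∑ j ∈ Finset.range (N + 1),
              (288 ^ s * √(2 / N) ^ (3 * s) * √(s : ℝ) ^ (3 * k)) * (K0 * (1 / 2) ^ j) :=
              Finset.sum_le_sum fun j _ => term_bound s j k hspos hks (by omega)
          _ = (288 ^ s * √(2 / N) ^ (3 * s) * √(s : ℝ) ^ (3 * k)) *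
              (K0 * ∑ j ∈ Finset.range (N + 1), (1 / 2) ^ j) := by
              rw [Finset.mul_sum, Finset.mul_sum]
          _ ≤ (288 ^ s * √(2 / N) ^ (3 * s) * √(s : ℝ) ^ (3 * k)) * (K0 * 2) := by
              have := K0_pos
              gcongr
              exact geom_half _
          _ = _ := by ring

end sums

section realize
variable {N : ℕ}

/-- number of half-edges at `u` matched to a half-edge at `v` -/
def adj (ρ : Perm (Fin N × Fin 3)) (u v : Fin N) : ℕ :=
  Fintype.card {x : Fin N × Fin 3 // (x.1, (ρ x).1) = (u, v)}

/-- the multigraph of a pairing -/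
def mOf (ρ : Perm (Fin N × Fin 3)) (u v : Fin N) : ℕ :=
  if u = v then adj ρ u v / 2 else adj ρ u v

/-- permutation of half-edges lying over a permutation of the vertices -/
def Over (σ : Perm (Fin N)) (g : Perm (Fin N × Fin 3)) : Prop := ∀ x, (g x).1 = σ x.1

lemma Over.mul {σ σ' : Perm (Fin N)} {g g' : Perm (Fin N × Fin 3)} (h : Over σ g)
    (h' : Over σ' g') : Over (σ * σ') (g * g') := by
  intro x
  simp [h (g' x), h' x]

lemma Over.inv {σ : Perm (Fin N)} {g : Perm (Fin N × Fin 3)} (h : Over σ g) :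
    Over σ⁻¹ g⁻¹ := by
  intro x
  have := h (g⁻¹ x)
  simp at this
  rw [this]; simp

lemma over_shear (σ : Perm (Fin N)) (τ : Fin N → Perm (Fin 3)) : Over σ (shear σ τ) := by
  rintro ⟨v, i⟩
  simp

lemma Over.exists_shear {σ : Perm (Fin N)} {g : Perm (Fin N × Fin 3)} (h : Over σ g) :
    ∃ τ, g = shear σ τ := by
  have hb : ∀ v, Function.Bijective (fun i => (g (v, i)).2) := by
    intro v
    refine (Fintype.bijective_iff_injective_and_card _).2 ⟨?_, rfl⟩
    intro i j hij
    have h1 : g (v, i) = g (v, j) := Prod.ext (by rw [h, h]) hij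
    have := g.injective h1
    simpa using this
  refine ⟨fun v => Equiv.ofBijective _ (hb v), ?_⟩
  ext1 ⟨v, i⟩
  rw [shear_apply]
  exact Prod.ext (h _) rfl

lemma adj_conj {σ : Perm (Fin N)} {g : Perm (Fin N × Fin 3)} (h : Over σ g)
    {ρ ρ' : Perm (Fin N × Fin 3)} (hc : g * ρ = ρ' * g) (u v : Fin N) :
    adj ρ' (σ u) (σ v) = adj ρ u v := by
  unfold adj
  symm
  refine Fintype.card_congr (g.subtypeEquiv ?_)
  intro x
  have h1 : ρ' (g x) = g (ρ x) := by
    have := congrArg (fun f : Perm _ => f x) hc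
    simpa using this.symm
  rw [h1, h, h]
  simp

lemma mOf_conj {σ : Perm (Fin N)} {g : Perm (Fin N × Fin 3)} (h : Over σ g)
    {ρ ρ' : Perm (Fin N × Fin 3)} (hc : g * ρ = ρ' * g) (u v : Fin N) :
    mOf ρ' (σ u) (σ v) = mOf ρ u v := by
  unfold mOf
  rw [adj_conj h hc]
  simp

lemma adj_symm {ρ : Perm (Fin N × Fin 3)} (hρ : IsPairing ρ) (u v : Fin N) :
    adj ρ u v = adj ρ v u := by
  unfold adj
  refine Fintype.card_congr (ρ.subtypeEquiv ?_)
  intro x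
  rw [hρ.1]
  simp [and_comm]

lemma adj_even {ρ : Perm (Fin N × Fin 3)} (hρ : IsPairing ρ) (u : Fin N) :
    2 ∣ adj ρ u u := by
  let f : {x : Fin N × Fin 3 // (x.1, (ρ x).1) = (u, u)} →
      {x : Fin N × Fin 3 // (x.1, (ρ x).1) = (u, u)} := fun x => ⟨ρ x.1, by
    have := x.2
    rw [hρ.1]
    simp only [Prod.mk.injEq] at this ⊢
    exact this.symm⟩
  have h := Equiv.Perm.card_fixedPoints_modEq (f := f) (p := 2) (n := 1) (by
    funext x
    apply Subtype.ext
    exact hρ.1 x.1)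
  have h0 : Fintype.card (Function.fixedPoints f) = 0 := by
    rw [Fintype.card_eq_zero_iff]
    refine ⟨fun x => hρ.2 x.1.1 ?_⟩
    exact congrArg Subtype.val x.2
  rw [h0] at h
  exact (Nat.modEq_zero_iff_dvd).1 h

lemma adj_sum (ρ : Perm (Fin N × Fin 3)) (u : Fin N) : ∑ v, adj ρ u v = 3 := by
  have h1 : ∀ v, adj ρ u v = ∑ i : Fin 3, if (ρ (u, i)).1 = v then 1 else 0 := by
    intro v
    unfold adj
    rw [Fintype.card_subtype, Finset.card_filter, Fintype.sum_prod_type]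
    rw [Finset.sum_eq_single u]
    · simp
    · intro b _ hb
      simp [hb]
    · simp
  simp_rw [h1]
  rw [Finset.sum_comm]
  simp

lemma mOf_cubic {ρ : Perm (Fin N × Fin 3)} (hρ : IsPairing ρ) : IsCubic (mOf ρ) := by
  constructor
  · intro u v
    unfold mOf
    rw [adj_symm hρ u v]
    by_cases h : u = v
    · simp [h]
    · simp [h, Ne.symm h]
  · intro u
    rw [← adj_sum ρ u, ← Finset.add_sum_erase _ _ (Finset.mem_univ u)]
    congr 1
    · simp only [mOf, if_true]
      exact Nat.mul_div_cancel' (adj_even hρ u)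
    · refine Finset.sum_congr rfl fun v hv => ?_
      have := Finset.ne_of_mem_erase hv
      simp [mOf, this.symm]

lemma adj_of_mOf {ρ ρ' : Perm (Fin N × Fin 3)} (hρ : IsPairing ρ) (hρ' : IsPairing ρ')
    (h : mOf ρ = mOf ρ') (u v : Fin N) : adj ρ u v = adj ρ' u v := by
  have h1 := congrFun (congrFun h u) v
  unfold mOf at h1
  by_cases e : u = v
  · subst e
    simp only [if_true] at h1
    have a := adj_even hρ u
    have b := adj_even hρ' u
    omega
  · simpa [e] using h1

lemma fin3_four (a b c d : Fin 3) (h1 : a ≠ b) (h2 : c ≠ d) (h3 : c ≠ a) (h4 : c ≠ b)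
    (h5 : d ≠ a) (h6 : d ≠ b) : False := by
  omega

/-- two pairings with the same multigraph are conjugate over the identity -/
lemma exists_conj {ρ ρ' : Perm (Fin N × Fin 3)} (hρ : IsPairing ρ) (hρ' : IsPairing ρ')
    (h : mOf ρ = mOf ρ') : ∃ e, Over 1 e ∧ e * ρ = ρ' * e := by
  classical
  let φ : Perm (Fin N × Fin 3) := Equiv.ofFiberEquiv (f := fun x => (x.1, (ρ x).1))
    (g := fun x => (x.1, (ρ' x).1)) (fun c => Fintype.equivOfCardEq (adj_of_mOf hρ hρ' h c.1 c.2))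
  have hφ : ∀ x, ((φ x).1, (ρ' (φ x)).1) = (x.1, (ρ x).1) := fun x =>
    Equiv.ofFiberEquiv_map (f := fun x => (x.1, (ρ x).1))
      (g := fun x => (x.1, (ρ' x).1)) _ x
  have hφ1 : ∀ x, (φ x).1 = x.1 := fun x => (Prod.mk.inj (hφ x)).1
  have hφ2 : ∀ x, (ρ' (φ x)).1 = (ρ x).1 := fun x => (Prod.mk.inj (hφ x)).2
  let e : Fin N × Fin 3 → Fin N × Fin 3 := fun x =>
    if x.1 ≤ (ρ x).1 then φ x else ρ' (φ (ρ x))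
  have he1 : ∀ x, (e x).1 = x.1 := by
    intro x
    simp only [e]
    split_ifs
    · exact hφ1 x
    · rw [hφ2, hρ.1]
  have he2 : ∀ x, (ρ' (e x)).1 = (ρ x).1 := by
    intro x
    simp only [e]
    split_ifs
    · exact hφ2 x
    · rw [hρ'.1, hφ1]
  have hinj : Function.Injective e := by
    intro x y hxy
    have a : x.1 = y.1 := by rw [← he1 x, ← he1 y, hxy]
    have b : (ρ x).1 = (ρ y).1 := by rw [← he2 x, ← he2 y, hxy]
    simp only [e, a, b] at hxy
    split_ifs at hxy
    · exact φ.injective hxy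
    · exact ρ.injective (φ.injective (ρ'.injective hxy))
  have hbij : Function.Bijective e := (Fintype.bijective_iff_injective_and_card _).2 ⟨hinj, rfl⟩
  refine ⟨Equiv.ofBijective e hbij, fun x => he1 x, ?_⟩
  ext1 x
  change e (ρ x) = ρ' (e x)
  simp only [e, hρ.1]
  rcases lt_trichotomy x.1 (ρ x).1 with hlt | heq | hgt
  · rw [if_neg (not_le.2 hlt), if_pos hlt.le]
  · rw [if_pos heq.ge, if_pos heq.le]
    by_contra hne
    have p1 := hφ1 x
    have p2 := hφ2 x
    have p3 := hφ1 (ρ x)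
    have p4 := hφ2 (ρ x)
    rw [hρ.1] at p4
    have n1 : φ x ≠ ρ' (φ x) := fun hh => hρ'.2 _ hh.symm
    have n2 : φ (ρ x) ≠ ρ' (φ (ρ x)) := fun hh => hρ'.2 _ hh.symm
    have n3 : φ (ρ x) ≠ φ x := fun hh => hρ.2 _ (φ.injective hh)
    have n5 : ρ' (φ (ρ x)) ≠ φ x := fun hh => hne (by rw [← hh, hρ'.1])
    have n6 : ρ' (φ (ρ x)) ≠ ρ' (φ x) := fun hh => n3 (ρ'.injective hh)
    have toSnd : ∀ a b : Fin N × Fin 3, a.1 = x.1 → b.1 = x.1 → a ≠ b → a.2 ≠ b.2 :=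
      fun a b ha hb hab hh => hab (Prod.ext (ha.trans hb.symm) hh)
    have q2 := p2.trans heq.symm
    have q3 := p3.trans heq.symm
    exact fin3_four _ _ _ _ (toSnd _ _ p1 q2 n1) (toSnd _ _ q3 p4 n2) (toSnd _ _ q3 p1 n3)
      (toSnd _ _ q3 q2 hne) (toSnd _ _ p4 p1 n5) (toSnd _ _ p4 q2 n6)
  · rw [if_pos hgt.le, if_neg (not_le.2 hgt), hρ'.1]

lemma exists_pairing {m : Fin N → Fin N → ℕ} (hm : IsCubic m) :
    ∃ ρ, IsPairing ρ ∧ mOf ρ = m := by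
  classical
  let A : Fin N → Fin N → ℕ := fun u v => if u = v then 2 * m u v else m u v
  have hA : ∀ u v, A u v = A v u := by
    intro u v
    simp only [A, hm.1 u v, eq_comm (a := u)]
  have hAs : ∀ u, ∑ v, A u v = 3 := by
    intro u
    rw [← hm.2 u, ← Finset.add_sum_erase _ _ (Finset.mem_univ u)]
    congr 1
    · simp [A]
    · refine Finset.sum_congr rfl fun v hv => ?_
      have := Finset.ne_of_mem_erase hv
      simp [A, this.symm]
  have hext : ∀ x y : (Σ u, Σ v, Fin (A u v)), x.1 = y.1 → x.2.1 = y.2.1 →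
      x.2.2.val = y.2.2.val → x = y := by
    rintro ⟨u, v, n, hn⟩ ⟨u', v', n', hn'⟩ h1 h2 h3
    simp only at h1 h2 h3
    subst h1; subst h2; subst h3
    rfl
  let r : (Σ u, Σ v, Fin (A u v)) → (Σ u, Σ v, Fin (A u v)) := fun x =>
    ⟨x.2.1, x.1, ⟨if x.1 = x.2.1 then A x.1 x.2.1 - 1 - x.2.2.val else x.2.2.val, by
      have := x.2.2.2
      have h2 := hA x.1 x.2.1
      split_ifs <;> omega⟩⟩
  have hr : Function.Involutive r := by
    rintro ⟨u, v, n, hn⟩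
    apply hext
    · rfl
    · rfl
    · simp only [r]
      by_cases e : u = v
      · subst e
        simp only [if_true]
        omega
      · simp [e, Ne.symm e]
  have hr2 : ∀ x, r x ≠ x := by
    rintro ⟨u, v, n, hn⟩ hx
    have e : v = u := congrArg Sigma.fst hx
    subst e
    have h3 : (r ⟨v, v, n, hn⟩).2.2.val = n := by rw [hx]
    simp only [r, if_true] at h3
    have : A v v = 2 * m v v := by simp [A]
    omega
  have hc : ∀ u, Nonempty (Fin 3 ≃ (Σ v, Fin (A u v))) := by
    intro u
    refine ⟨Fintype.equivOfCardEq ?_⟩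
    simp [hAs u]
  let E : (Fin N × Fin 3) ≃ (Σ u, Σ v, Fin (A u v)) :=
    (Equiv.sigmaEquivProd _ _).symm.trans (Equiv.sigmaCongrRight fun u => (hc u).some)
  have hE : ∀ x, (E x).1 = x.1 := fun x => rfl
  let ρ : Perm (Fin N × Fin 3) := (E.trans hr.toPerm).trans E.symm
  have hρE : ∀ x, E (ρ x) = r (E x) := by
    intro x
    simp [ρ]
  have hρ1 : ∀ x, (ρ x).1 = (E x).2.1 := by
    intro x
    rw [← hE (ρ x), hρE]
  have hρ : IsPairing ρ := by
    constructor
    · intro x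
      apply E.injective
      rw [hρE, hρE, hr]
    · intro x hx
      apply hr2 (E x)
      rw [← hρE, hx]
  refine ⟨ρ, hρ, ?_⟩
  have hadj : ∀ u v, adj ρ u v = A u v := by
    intro u v
    have e1 : adj ρ u v = Fintype.card {y : (Σ u, Σ v, Fin (A u v)) // y.1 = u ∧ y.2.1 = v} := by
      unfold adj
      refine Fintype.card_congr (E.subtypeEquiv ?_)
      intro x
      rw [← hρ1, Prod.mk.injEq]
      exact Iff.rfl
    rw [e1]
    have e2 : {y : (Σ u, Σ v, Fin (A u v)) // y.1 = u ∧ y.2.1 = v} ≃ Fin (A u v) :=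
      { toFun := fun y => ⟨y.1.2.2.val, by
          have h0 := y.1.2.2.2
          have h3 : A y.1.1 y.1.2.1 = A u v := congrArg₂ A y.2.1 y.2.2
          exact h0.trans_eq h3⟩
        invFun := fun n => ⟨⟨u, v, n⟩, rfl, rfl⟩
        left_inv := fun y => Subtype.ext (hext _ _ y.2.1.symm y.2.2.symm rfl)
        right_inv := fun n => rfl }
    rw [Fintype.card_congr e2, Fintype.card_fin]
  funext u v
  unfold mOf
  rw [hadj]
  by_cases e : u = v
  · simp [A, e]
  · simp [A, e]

lemma cubic_finite (N : ℕ) : Finite {m : Fin N → Fin N → ℕ // IsCubic m} := by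
  refine Finite.of_injective
    (fun m : {m : Fin N → Fin N → ℕ // IsCubic m} => (exists_pairing m.2).choose) ?_
  intro m m' h
  apply Subtype.ext
  rw [← (exists_pairing m.2).choose_spec.2, ← (exists_pairing m'.2).choose_spec.2]
  exact congrArg mOf h

lemma card_tau : Fintype.card (Fin N → Perm (Fin 3)) = 6 ^ N := by
  simp [Fintype.card_perm, Nat.factorial]

lemma pairing_le_cubic (N : ℕ) : pairingCount (Fin N × Fin 3) ≤
    Nat.card {m : Fin N → Fin N → ℕ // IsCubic m} * 6 ^ N := by
  classical
  have hfin := cubic_finite N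
  have h0 : ∀ m : {m : Fin N → Fin N → ℕ // IsCubic m}, ∃ ρ, IsPairing ρ ∧ mOf ρ = m.1 :=
    fun m => exists_pairing m.2
  choose base hb1 hb2 using h0
  have h1 : ∀ ρ : {ρ : Perm (Fin N × Fin 3) // IsPairing ρ}, ∃ h : Fin N → Perm (Fin 3),
      shear 1 h * base ⟨mOf ρ.1, mOf_cubic ρ.2⟩ = ρ.1 * shear 1 h := by
    intro ρ
    obtain ⟨e, he, hc⟩ := exists_conj (hb1 ⟨mOf ρ.1, mOf_cubic ρ.2⟩) ρ.2 (hb2 _)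
    obtain ⟨h, rfl⟩ := he.exists_shear
    exact ⟨h, hc⟩
  choose sec hsec using h1
  have := Nat.card_le_card_of_injective
    (fun ρ : {ρ : Perm (Fin N × Fin 3) // IsPairing ρ} =>
      ((⟨mOf ρ.1, mOf_cubic ρ.2⟩ : {m : Fin N → Fin N → ℕ // IsCubic m}), sec ρ)) (by
    intro ρ ρ' h
    simp only [Prod.mk.injEq] at h
    have a := hsec ρ
    rw [h.1, h.2, hsec ρ'] at a
    exact Subtype.ext (mul_right_cancel a).symm)
  rw [Nat.card_prod, Nat.card_eq_fintype_card (α := Fin N → Perm (Fin 3)), card_tau] at this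
  exact this

lemma shear_injective (σ : Perm (Fin N)) : Function.Injective (shear σ) := by
  intro τ τ' h
  funext v
  ext1 i
  have := congrArg (fun f : Perm _ => (f (v, i)).2) h
  simpa using this

lemma cubic_inv_le (σ : Perm (Fin N)) :
    Nat.card {m : Fin N → Fin N → ℕ // IsCubic m ∧ ∀ u v, m (σ u) (σ v) = m u v} * 6 ^ N ≤
      ∑ τ : Fin N → Perm (Fin 3), commCount (shear σ τ) := by
  classical
  have h0 : ∀ m : {m : Fin N → Fin N → ℕ // IsCubic m}, ∃ ρ, IsPairing ρ ∧ mOf ρ = m.1 :=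
    fun m => exists_pairing m.2
  choose base hb1 hb2 using h0
  have h1 : ∀ ρ : {ρ : Perm (Fin N × Fin 3) // IsPairing ρ}, ∃ e,
      Over 1 e ∧ e * base ⟨mOf ρ.1, mOf_cubic ρ.2⟩ = ρ.1 * e := by
    intro ρ
    exact exists_conj (hb1 ⟨mOf ρ.1, mOf_cubic ρ.2⟩) ρ.2 (hb2 _)
  choose sec hsec1 hsec using h1
  have h2 : ∀ m : {m : Fin N → Fin N → ℕ // IsCubic m ∧ ∀ u v, m (σ u) (σ v) = m u v},
      ∃ g, Over σ g ∧ g * base ⟨m.1, m.2.1⟩ = base ⟨m.1, m.2.1⟩ * g := by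
    intro m
    set ρ0 := base ⟨m.1, m.2.1⟩ with hρ0
    have p0 : IsPairing ρ0 := hb1 _
    have q0 : mOf ρ0 = m.1 := hb2 ⟨m.1, m.2.1⟩
    set s := shear σ (fun _ => 1) with hs
    have p1 : IsPairing (s * ρ0 * s⁻¹) := by
      constructor
      · intro x; simp [p0.1]
      · intro x hx
        apply p0.2 (s⁻¹ x)
        apply s.injective
        simpa using hx
    have q1 : mOf (s * ρ0 * s⁻¹) = mOf ρ0 := by
      funext u v
      have a := mOf_conj (over_shear σ (fun _ => 1)) (ρ := ρ0) (ρ' := s * ρ0 * s⁻¹)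
        (by rw [← hs]; group) (σ⁻¹ u) (σ⁻¹ v)
      rw [q0] at a ⊢
      have b := m.2.2 (σ⁻¹ u) (σ⁻¹ v)
      have hu : ∀ w, σ (σ⁻¹ w) = w := fun w => by simp
      rw [hu, hu] at a b
      rw [a, b]
    obtain ⟨e, he, hc⟩ := exists_conj p1 p0 q1
    refine ⟨e * s, by simpa using he.mul (over_shear σ (fun _ => 1)), ?_⟩
    calc e * s * ρ0 = e * (s * ρ0 * s⁻¹) * s := by group
      _ = ρ0 * (e * s) := by rw [hc, mul_assoc]
  choose g0 hg1 hg using h2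
  let R : {m : Fin N → Fin N → ℕ // IsCubic m ∧ ∀ u v, m (σ u) (σ v) = m u v} →
      (Fin N → Perm (Fin 3)) → Perm (Fin N × Fin 3) := fun m h =>
    shear 1 h * base ⟨m.1, m.2.1⟩ * (shear 1 h)⁻¹
  have hR : ∀ m h, IsPairing (R m h) := by
    intro m h
    have p0 : IsPairing (base ⟨m.1, m.2.1⟩) := hb1 _
    constructor
    · intro x; simp [R, p0.1]
    · intro x hx
      apply p0.2 ((shear 1 h)⁻¹ x)
      apply (shear 1 h).injective
      simpa [R] using hx
  have hRm : ∀ m h, mOf (R m h) = m.1 := by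
    intro m h
    funext u v
    have a := mOf_conj (over_shear 1 h) (ρ := base ⟨m.1, m.2.1⟩) (ρ' := R m h)
      (by simp [R]) u v
    rw [hb2] at a
    simpa using a
  have hbase : ∀ m h, base ⟨mOf (R m h), mOf_cubic (hR m h)⟩ = base ⟨m.1, m.2.1⟩ := by
    intro m h
    congr 1
    exact Subtype.ext (hRm m h)
  let G : {m : Fin N → Fin N → ℕ // IsCubic m ∧ ∀ u v, m (σ u) (σ v) = m u v} →
      (Fin N → Perm (Fin 3)) → Perm (Fin N × Fin 3) := fun m h =>
    shear 1 h * g0 m * (sec ⟨R m h, hR m h⟩)⁻¹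
  have hG : ∀ m h, Over σ (G m h) := by
    intro m h
    have := ((over_shear 1 h).mul (hg1 m)).mul (hsec1 ⟨R m h, hR m h⟩).inv
    simpa [G] using this
  have hGc : ∀ m h, R m h * G m h = G m h * R m h := by
    intro m h
    have a := hsec ⟨R m h, hR m h⟩
    rw [hbase] at a
    have b := hg m
    have a' : (sec ⟨R m h, hR m h⟩)⁻¹ * R m h =
        base ⟨m.1, m.2.1⟩ * (sec ⟨R m h, hR m h⟩)⁻¹ := by
      rw [inv_mul_eq_iff_eq_mul, ← mul_assoc, a]
      simp
    calc R m h * G m h = shear 1 h * (base ⟨m.1, m.2.1⟩ * g0 m) *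
          (sec ⟨R m h, hR m h⟩)⁻¹ := by simp only [R, G]; group
      _ = shear 1 h * g0 m * (base ⟨m.1, m.2.1⟩ * (sec ⟨R m h, hR m h⟩)⁻¹) := by
          rw [← b]; group
      _ = G m h * R m h := by rw [← a']; simp only [G]; group
  have hGs : ∀ m h, ∃ τ, G m h = shear σ τ := fun m h => (hG m h).exists_shear
  choose T hT using hGs
  have hfin : Finite {m : Fin N → Fin N → ℕ // IsCubic m ∧ ∀ u v, m (σ u) (σ v) = m u v} := by
    have := cubic_finite N
    exact Finite.of_injective
      (fun m => (⟨m.1, m.2.1⟩ : {m : Fin N → Fin N → ℕ // IsCubic m})) (by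
        intro a b h
        exact Subtype.ext (Subtype.mk.inj h))
  have := Nat.card_le_card_of_injective
    (fun p : {m : Fin N → Fin N → ℕ // IsCubic m ∧ ∀ u v, m (σ u) (σ v) = m u v} ×
        (Fin N → Perm (Fin 3)) =>
      (⟨T p.1 p.2, ⟨R p.1 p.2, hR _ _, by rw [← hT]; exact hGc _ _⟩⟩ :
        Σ τ : Fin N → Perm (Fin 3), {ρ : Perm (Fin N × Fin 3) //
          IsPairing ρ ∧ ρ * shear σ τ = shear σ τ * ρ})) (by
    rintro ⟨m, h⟩ ⟨m', h'⟩ hh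
    have hfst : T m h = T m' h' := congrArg Sigma.fst hh
    have hsnd : R m h = R m' h' := congrArg (fun z : (Σ τ : Fin N → Perm (Fin 3),
      {ρ : Perm (Fin N × Fin 3) // IsPairing ρ ∧ ρ * shear σ τ = shear σ τ * ρ}) => z.2.1) hh
    have hmm : m = m' := by
      apply Subtype.ext
      rw [← hRm m h, ← hRm m' h', hsnd]
    subst hmm
    have hGG : G m h = G m h' := by rw [hT, hT, hfst]
    simp only [G, hsnd] at hGG
    have := mul_right_cancel (mul_right_cancel hGG)
    rw [shear_injective 1 this])
  rw [Nat.card_prod, Nat.card_eq_fintype_card (α := Fin N → Perm (Fin 3)), card_tau,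
    Nat.card_sigma] at this
  exact this

end realize

section final
variable {N : ℕ}

lemma card_type (p k : ℕ) (hk : 1 ≤ k) (hp : 2 ≤ p) :
    ((Finset.univ.filter (fun σ : Perm (Fin N) =>
      σ.cycleType = Multiset.replicate k p)).card : ℝ) * ((p * k : ℕ) : ℝ) ^ k ≤
      (N : ℝ) ^ (p * k) * 3 ^ (p * k) := by
  classical
  have h := Equiv.Perm.card_of_cycleType_mul_eq (α := Fin N) (Multiset.replicate k p)
  set c := (Finset.univ.filter (fun σ : Perm (Fin N) =>
      σ.cycleType = Multiset.replicate k p)).card with hc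
  have hk0 : k ≠ 0 := by omega
  simp only [Multiset.sum_replicate, Multiset.prod_replicate, smul_eq_mul, Fintype.card_fin,
    Multiset.toFinset_replicate, hk0, if_false, Finset.prod_singleton,
    Multiset.count_replicate_self] at h
  rw [mul_comm k p] at h
  have hmain : c * (p ^ k * k.factorial) ≤ N ^ (p * k) := by
    split_ifs at h with hh
    · have h1 : (N - p * k).factorial * (c * (p ^ k * k.factorial)) =
          (N - p * k).factorial * N.descFactorial (p * k) := by
        rw [Nat.factorial_mul_descFactorial hh.1, ← h]; ring
      have h2 := Nat.eq_of_mul_eq_mul_left (Nat.factorial_pos _) h1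
      rw [h2]
      exact Nat.descFactorial_le_pow _ _
    · have : c = 0 := by
        rcases mul_eq_zero.1 h with h | h
        · exact h
        · exfalso
          have : 0 < (N - p * k).factorial * p ^ k * k.factorial := by positivity
          omega
      simp [this]
  have hmain' : (c : ℝ) * (p ^ k * k.factorial) ≤ (N : ℝ) ^ (p * k) := by exact_mod_cast hmain
  have h3 : (3 : ℝ) ^ k ≤ 3 ^ (p * k) :=
    pow_le_pow_right₀ (by norm_num) (Nat.le_mul_of_pos_left _ (by omega))
  calc (c : ℝ) * ((p * k : ℕ) : ℝ) ^ k = c * (p ^ k * (k : ℝ) ^ k) := by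
        push_cast; rw [mul_pow]
    _ ≤ c * (p ^ k * (k.factorial * 3 ^ k)) := by
        gcongr
        exact pow_self_le k
    _ = (c * (p ^ k * k.factorial)) * 3 ^ k := by ring
    _ ≤ (N : ℝ) ^ (p * k) * 3 ^ (p * k) := by gcongr

/-- fourth root of `N` -/
noncomputable def qq (N : ℕ) : ℝ := √√(N : ℝ)

lemma arith_bound (c : ℝ) (hc : 0 ≤ c) (s k : ℕ) (hks : 2 * k ≤ s) (hsN : s ≤ N) (h2 : 2 ≤ N)
    (h : c * (s : ℝ) ^ k ≤ (N : ℝ) ^ s * 3 ^ s) :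
    c * (288 ^ s * √(2 / N) ^ (3 * s) * √(s : ℝ) ^ (3 * k)) ≤ (3456 / qq N) ^ s := by
  have hN0 : (0 : ℝ) < N := by exact_mod_cast (by omega : 0 < N)
  have hq2 : qq N ^ 2 = √(N : ℝ) := Real.sq_sqrt (Real.sqrt_nonneg _)
  have hq1 : 1 ≤ qq N := by
    unfold qq
    rw [Real.one_le_sqrt, Real.one_le_sqrt]
    exact_mod_cast (by omega : 1 ≤ N)
  have hN4 : (N : ℝ) = qq N ^ 4 := by
    have : (qq N ^ 2) ^ 2 = N := by rw [hq2]; exact Real.sq_sqrt hN0.le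
    rw [← this]; ring
  have hs : √(s : ℝ) ^ k ≤ qq N ^ s := by
    calc √(s : ℝ) ^ k ≤ √(N : ℝ) ^ k := by
          gcongr
      _ = qq N ^ (2 * k) := by rw [← hq2, ← pow_mul]
      _ ≤ qq N ^ s := pow_le_pow_right₀ hq1 hks
  have e1 : √(s : ℝ) ^ (3 * k) = (s : ℝ) ^ k * √(s : ℝ) ^ k := by
    have : √(s : ℝ) ^ (3 * k) = (√(s : ℝ) ^ 2) ^ k * √(s : ℝ) ^ k := by
      rw [← pow_mul, ← pow_add]; congr 1; omega
    rw [this, Real.sq_sqrt (by positivity)]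
  have e2 : √(2 / (N : ℝ)) ≤ 2 / qq N ^ 2 := by
    rw [Real.sqrt_le_left (by positivity), div_pow, ← pow_mul, ← hN4]
    gcongr
    norm_num
  have e3 : √(2 / (N : ℝ)) ^ (3 * s) ≤ ((2 / qq N ^ 4) * (2 / qq N ^ 2)) ^ s := by
    rw [pow_mul]
    gcongr
    have : √(2 / (N : ℝ)) ^ 3 = √(2 / (N : ℝ)) ^ 2 * √(2 / (N : ℝ)) := by ring
    rw [this, Real.sq_sqrt (by positivity), ← hN4]
    gcongr
  calc c * (288 ^ s * √(2 / N) ^ (3 * s) * √(s : ℝ) ^ (3 * k))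
      = (c * (s : ℝ) ^ k) * (288 ^ s * √(2 / N) ^ (3 * s) * √(s : ℝ) ^ k) := by
        rw [e1]; ring
    _ ≤ ((N : ℝ) ^ s * 3 ^ s) * (288 ^ s * ((2 / qq N ^ 4) * (2 / qq N ^ 2)) ^ s *
        qq N ^ s) := by gcongr
    _ = (qq N ^ 4 * 3 * (288 * ((2 / qq N ^ 4) * (2 / qq N ^ 2)) * qq N)) ^ s := by
        rw [hN4]; simp only [mul_pow]
    _ = (3456 / qq N) ^ s := by
        congr 1
        field_simp
        norm_num

lemma type_bound (hN : Even N) (h2 : 2 ≤ N) (p k : ℕ) (hk : 1 ≤ k) (hp : 2 ≤ p) :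
    ∑ σ : {σ : Perm (Fin N) // σ.cycleType = Multiset.replicate k p},
      ∑ τ : Fin N → Perm (Fin 3), (commCount (shear σ.1 τ) : ℝ) ≤
      pairingCount (Fin N × Fin 3) * (2 * K0 * (3456 / qq N) ^ (p * k)) := by
  classical
  have hK := K0_pos
  have hq : 0 ≤ qq N := Real.sqrt_nonneg _
  by_cases hsN : p * k ≤ N
  swap
  · have : IsEmpty {σ : Perm (Fin N) // σ.cycleType = Multiset.replicate k p} := by
      refine ⟨fun σ => hsN ?_⟩
      have h1 := Equiv.Perm.sum_cycleType_le σ.1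
      rw [σ.2] at h1
      simp at h1
      rwa [mul_comm]
    rw [Finset.univ_eq_empty, Finset.sum_empty]
    positivity
  have hb : ∀ σ : {σ : Perm (Fin N) // σ.cycleType = Multiset.replicate k p},
      ∑ τ : Fin N → Perm (Fin 3), (commCount (shear σ.1 τ) : ℝ) ≤
      pairingCount (Fin N × Fin 3) *
        (2 * K0 * (288 ^ (p * k) * √(2 / N) ^ (3 * (p * k)) * √((p * k : ℕ) : ℝ) ^ (3 * k))) := by
    intro σ
    refine sum_commCount hN h2 σ.1 ?_ (p * k) k ?_ ?_ (by gcongr)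
    · intro h
      have := σ.2
      rw [h, Equiv.Perm.cycleType_one] at this
      have := congrArg Multiset.card this
      simp at this
      omega
    · rw [← Equiv.Perm.sum_cycleType, σ.2]
      simp [mul_comm]
    · have := congrArg Multiset.card σ.2
      rw [Equiv.Perm.cycleType_def] at this
      simpa using this
  refine (Finset.sum_le_sum fun σ _ => hb σ).trans ?_
  rw [Finset.sum_const, Finset.card_univ, Fintype.card_subtype, nsmul_eq_mul]
  have h3 := arith_bound (N := N) _ (Nat.cast_nonneg _) (p * k) k (by gcongr) hsN h2
    (card_type (N := N) p k hk hp)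
  calc _ = (pairingCount (Fin N × Fin 3) : ℝ) * (2 * K0 * (_ *
        (288 ^ (p * k) * √(2 / N) ^ (3 * (p * k)) * √((p * k : ℕ) : ℝ) ^ (3 * k)))) := by ring
    _ ≤ _ := by gcongr

/-- a graph with a nontrivial automorphism has one of prime order -/
lemma exists_prime_aut (m : Fin N → Fin N → ℕ)
    (h : ∃ σ : Perm (Fin N), σ ≠ 1 ∧ ∀ u v, m (σ u) (σ v) = m u v) :
    ∃ a b : Fin (N + 1), ∃ σ : Perm (Fin N),
      σ.cycleType = Multiset.replicate (b.1 + 1) (a.1 + 2) ∧ ∀ u v, m (σ u) (σ v) = m u v := by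
  classical
  obtain ⟨σ, h1, hm⟩ := h
  have ho : orderOf σ ≠ 1 := by rwa [Ne, orderOf_eq_one_iff]
  set p := (orderOf σ).minFac with hpdef
  have hp : p.Prime := Nat.minFac_prime ho
  have ho0 : 0 < orderOf σ := orderOf_pos σ
  have hpow : ∀ n : ℕ, ∀ u v, m ((σ ^ n) u) ((σ ^ n) v) = m u v := by
    intro n
    induction n with
    | zero => intro u v; simp
    | succ n ih =>
      intro u v
      rw [pow_succ']
      simp only [Equiv.Perm.mul_apply]
      rw [hm, ih]
  have hord : orderOf (σ ^ (orderOf σ / p)) = p := by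
    have := orderOf_pow_orderOf_div (x := σ) ho0.ne' (Nat.minFac_dvd _)
    exact this
  set g := σ ^ (orderOf σ / p) with hg
  obtain ⟨n, hn⟩ := Equiv.Perm.cycleType_prime_order (σ := g) (by rw [hord]; exact hp)
  rw [hord] at hn
  have hsum := Equiv.Perm.sum_cycleType_le g
  rw [hn] at hsum
  simp only [Multiset.sum_replicate, smul_eq_mul, Fintype.card_fin] at hsum
  have hp2 := hp.two_le
  have hpN : p ≤ N := le_trans (Nat.le_mul_of_pos_left p (Nat.succ_pos n)) hsum
  have hnN : n + 1 ≤ N := le_trans (Nat.le_mul_of_pos_right (n + 1) (by omega)) hsum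
  refine ⟨⟨p - 2, by omega⟩, ⟨n, by omega⟩, g, ?_, hpow _⟩
  simp only
  rw [hn]
  congr 1
  omega

lemma bad_bound (hN : Even N) (h2 : 2 ≤ N) (hx : 3456 / qq N ≤ 1 / 2) :
    (Nat.card {m : Fin N → Fin N → ℕ // IsCubic m ∧
      ∃ σ : Perm (Fin N), σ ≠ 1 ∧ ∀ u v, m (σ u) (σ v) = m u v} : ℝ) * 6 ^ N ≤
    pairingCount (Fin N × Fin 3) * (8 * K0 * (3456 / qq N) ^ 2) := by
  classical
  have hK := K0_pos
  have hq : 0 ≤ qq N := Real.sqrt_nonneg _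
  have hx0 : 0 ≤ 3456 / qq N := by positivity
  set x := 3456 / qq N with hxdef
  let I := Σ ab : Fin (N + 1) × Fin (N + 1),
    {σ : Perm (Fin N) // σ.cycleType = Multiset.replicate (ab.2.1 + 1) (ab.1.1 + 2)}
  let Inv : Perm (Fin N) → Type := fun σ =>
    {m : Fin N → Fin N → ℕ // IsCubic m ∧ ∀ u v, m (σ u) (σ v) = m u v}
  have hInv : ∀ σ, Finite (Inv σ) := by
    intro σ
    have := cubic_finite N
    exact Finite.of_injective
      (fun m : Inv σ => (⟨m.1, m.2.1⟩ : {m : Fin N → Fin N → ℕ // IsCubic m})) (by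
        intro a b h
        exact Subtype.ext (Subtype.mk.inj h))
  have hch : ∀ m : {m : Fin N → Fin N → ℕ // IsCubic m ∧
      ∃ σ : Perm (Fin N), σ ≠ 1 ∧ ∀ u v, m (σ u) (σ v) = m u v},
      ∃ i : I, ∀ u v, m.1 (i.2.1 u) (i.2.1 v) = m.1 u v := by
    intro m
    obtain ⟨a, b, σ, h1, h2⟩ := exists_prime_aut m.1 m.2.2
    exact ⟨⟨(a, b), ⟨σ, h1⟩⟩, h2⟩
  choose F hF using hch
  have h1 := Nat.card_le_card_of_injective
    (fun m : {m : Fin N → Fin N → ℕ // IsCubic m ∧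
      ∃ σ : Perm (Fin N), σ ≠ 1 ∧ ∀ u v, m (σ u) (σ v) = m u v} =>
      (⟨F m, ⟨m.1, m.2.1, hF m⟩⟩ : Σ i : I, Inv i.2.1)) (by
    intro m m' h
    have := congrArg (fun z : (Σ i : I, Inv i.2.1) => z.2.1) h
    exact Subtype.ext this)
  rw [Nat.card_sigma] at h1
  have h3 : (Nat.card {m : Fin N → Fin N → ℕ // IsCubic m ∧
      ∃ σ : Perm (Fin N), σ ≠ 1 ∧ ∀ u v, m (σ u) (σ v) = m u v}) * 6 ^ N ≤
      ∑ i : I, ∑ τ : Fin N → Perm (Fin 3), commCount (shear i.2.1 τ) := by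
    refine (Nat.mul_le_mul_right _ h1).trans ?_
    rw [Finset.sum_mul]
    exact Finset.sum_le_sum fun i _ => cubic_inv_le i.2.1
  have h4 : (Nat.card {m : Fin N → Fin N → ℕ // IsCubic m ∧
      ∃ σ : Perm (Fin N), σ ≠ 1 ∧ ∀ u v, m (σ u) (σ v) = m u v} : ℝ) * 6 ^ N ≤
      ∑ i : I, ∑ τ : Fin N → Perm (Fin 3), (commCount (shear i.2.1 τ) : ℝ) := by
    exact_mod_cast h3
  refine h4.trans ?_
  rw [Fintype.sum_sigma]
  calc _ ≤ ∑ ab : Fin (N + 1) × Fin (N + 1), (pairingCount (Fin N × Fin 3) : ℝ) *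
        (2 * K0 * (x ^ 2 * ((1 / 2) ^ ab.1.1 * (1 / 2) ^ ab.2.1))) := by
        refine Finset.sum_le_sum fun ab _ => ?_
        refine (type_bound hN h2 (ab.1.1 + 2) (ab.2.1 + 1) (by omega) (by omega)).trans ?_
        rw [← hxdef]
        gcongr
        calc x ^ ((ab.1.1 + 2) * (ab.2.1 + 1)) ≤ x ^ (2 + ab.1.1 + ab.2.1) :=
              pow_le_pow_of_le_one hx0 (by linarith) (by nlinarith)
          _ = x ^ 2 * (x ^ ab.1.1 * x ^ ab.2.1) := by ring
          _ ≤ _ := by gcongr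
    _ = (pairingCount (Fin N × Fin 3) : ℝ) * (2 * K0 * (x ^ 2 *
        ((∑ a : Fin (N + 1), (1 / 2 : ℝ) ^ a.1) * ∑ b : Fin (N + 1), (1 / 2 : ℝ) ^ b.1))) := by
        rw [← Finset.mul_sum, ← Finset.mul_sum, ← Finset.mul_sum, Finset.sum_mul_sum,
          Fintype.sum_prod_type]
    _ ≤ (pairingCount (Fin N × Fin 3) : ℝ) * (2 * K0 * (x ^ 2 * (2 * 2))) := by
        have hg : ∑ a : Fin (N + 1), (1 / 2 : ℝ) ^ a.1 ≤ 2 := by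
          rw [Fin.sum_univ_eq_sum_range (fun i => (1 / 2 : ℝ) ^ i)]
          exact geom_half _
        gcongr
    _ = _ := by ring

end final

/-- Theorem: the proportion of labelled cubic multigraphs on `Fin N` admitting a
nontrivial automorphism tends to `0` as `N → ∞` through even `N`. -/
theorem almost_all_cubic_multigraphs_asymmetric :
    Tendsto
      (fun N : ℕ =>
        (Nat.card {m : Fin N → Fin N → ℕ // IsCubic m ∧
            ∃ σ : Equiv.Perm (Fin N), σ ≠ 1 ∧ ∀ u v, m (σ u) (σ v) = m u v} : ℝ) /
          (Nat.card {m : Fin N → Fin N → ℕ // IsCubic m} : ℝ))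
      (atTop ⊓ 𝓟 {N : ℕ | Even N}) (𝓝 0) := by
  have hq : Tendsto (fun N : ℕ => qq N) atTop atTop := by
    unfold qq
    exact Real.tendsto_sqrt_atTop.comp (Real.tendsto_sqrt_atTop.comp tendsto_natCast_atTop_atTop)
  have hx : Tendsto (fun N : ℕ => 3456 / qq N) atTop (𝓝 0) := hq.const_div_atTop _
  have hb : Tendsto (fun N : ℕ => 8 * K0 * (3456 / qq N) ^ 2) (atTop ⊓ 𝓟 {N : ℕ | Even N})
      (𝓝 0) := by
    have := (hx.pow 2).const_mul (8 * K0)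
    simp only [ne_eq, OfNat.ofNat_ne_zero, not_false_eq_true, zero_pow, mul_zero] at this
    exact this.mono_left inf_le_left
  refine tendsto_of_tendsto_of_tendsto_of_le_of_le' tendsto_const_nhds hb
    (Eventually.of_forall fun N => by positivity) ?_
  have hev : ∀ᶠ N : ℕ in atTop, 3456 / qq N ≤ 1 / 2 :=
    hx.eventually_le_const (by norm_num)
  rw [eventually_inf_principal]
  filter_upwards [hev, eventually_ge_atTop 2] with N h1 h2 hN
  have hbad := bad_bound hN h2 h1
  have hlow : (pairingCount (Fin N × Fin 3) : ℝ) ≤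
      (Nat.card {m : Fin N → Fin N → ℕ // IsCubic m} : ℝ) * 6 ^ N := by
    exact_mod_cast pairing_le_cubic N
  have hK := K0_pos
  refine div_le_of_le_mul₀ (by positivity) (by positivity) ?_
  have h6 : (0 : ℝ) < 6 ^ N := by positivity
  refine le_of_mul_le_mul_right ?_ h6
  calc _ ≤ _ := hbad
    _ ≤ ((Nat.card {m : Fin N → Fin N → ℕ // IsCubic m} : ℝ) * 6 ^ N) *
        (8 * K0 * (3456 / qq N) ^ 2) := by gcongr
    _ = _ := by ring
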